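/- arXiv:1602.01286 — 5 statements merged into one kernel-verified Lean document; each statement's English description precedes it below -/
import Mathlib

section
/- There exist constants C > 0 and n₀ such that for every integer n ≥ n₀ and every set S ⊆ Z̃_n of cardinality k ≥ 1, there exists a set D ⊆ Z_n with Z_n = D ∪ (D + S) (i.e., D is a dominating set of the circulant graph C_n(S)) satisfying #D ≤ C · n (log n)^{5/2} / (k^{1/2} · log log n). -/
/-!
Put `k = #S`. Double counting the pairs `(d, v)` with `v ∈ d + S` shows that every set of uncovered
vertices has a fraction at least `k / n` of its elements in a single translate of `S`. After `m`
greedy choices at most `n (1 - k / n) ^ m` vertices remain, and covering these one at a time gives a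
`D` of size at most `m + n (1 - k / n) ^ m`. For `m = ⌈(n / k) log k⌉` this is at most
`(n / k) (1 + log k) + 1 ≤ 2 n / √k`, which beats the required bound because
`log (log n) ≤ (log n) ^ (5 / 2)`.
-/

section Covering

open Finset

variable {ι β : Type*} {r : ι → β → Prop} {s : Finset ι} {t : Finset β} {k : ℕ}

lemma exists_subset_cover_card_le_card (h : ∀ b ∈ t, ∃ a ∈ s, r a b) :
    ∃ D ⊆ s, (∀ b ∈ t, ∃ a ∈ D, r a b) ∧ #D ≤ #t := by
  classical
  choose f hfs hfr using h
  refine ⟨t.attach.image fun b : t ↦ f b b.2, ?_, fun b hb ↦ ⟨f b hb, ?_, hfr b hb⟩, ?_⟩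
  · exact image_subset_iff.2 fun b _ ↦ hfs b b.2
  · exact mem_image_of_mem (fun b : t ↦ f b b.2) (mem_attach t ⟨b, hb⟩)
  · exact card_image_le.trans_eq t.card_attach

variable [∀ a b, Decidable (r a b)]

lemma exists_card_mul_le_card_mul_card_bipartiteAbove (hs : s.Nonempty)
    (hk : ∀ b ∈ t, k ≤ #(s.bipartiteBelow r b)) :
    ∃ a ∈ s, #t * k ≤ #s * #(t.bipartiteAbove r a) := by
  refine exists_le_of_sum_le hs ?_
  calc ∑ _a ∈ s, #t * k = #s * (#t * k) := by rw [sum_const, smul_eq_mul]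
    _ ≤ #s * ∑ b ∈ t, #(s.bipartiteBelow r b) :=
      Nat.mul_le_mul_left _ (card_nsmul_le_sum t _ k hk)
    _ = ∑ a ∈ s, #s * #(t.bipartiteAbove r a) := by
      rw [← sum_card_bipartiteAbove_eq_sum_card_bipartiteBelow, mul_sum]

lemma exists_card_filter_not_le (hs : s.Nonempty) (hk : ∀ b ∈ t, k ≤ #(s.bipartiteBelow r b)) :
    ∃ a ∈ s, (#{b ∈ t | ¬ r a b} : ℝ) ≤ #t * (1 - k / #s) := by
  obtain ⟨a, ha, hcount⟩ := exists_card_mul_le_card_mul_card_bipartiteAbove hs hk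
  refine ⟨a, ha, ?_⟩
  have hs₀ : (0 : ℝ) < #s := by exact_mod_cast hs.card_pos
  have hcovered : (#t * k / #s : ℝ) ≤ #{b ∈ t | r a b} := by
    rw [div_le_iff₀' hs₀]
    exact_mod_cast hcount
  have hsplit : (#{b ∈ t | r a b} + #{b ∈ t | ¬ r a b} : ℝ) = #t := by
    exact_mod_cast card_filter_add_card_filter_not (s := t) (r a)
  calc (#{b ∈ t | ¬ r a b} : ℝ) ≤ #t - #t * k / #s := by linarith
    _ = #t * (1 - k / #s) := by ring

theorem exists_subset_cover_card_le_add_mul_pow (hk₀ : 0 < k)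
    (hk : ∀ b ∈ t, k ≤ #(s.bipartiteBelow r b)) (m : ℕ) :
    ∃ D ⊆ s, (∀ b ∈ t, ∃ a ∈ D, r a b) ∧ (#D : ℝ) ≤ m + #t * (1 - k / #s) ^ m := by
  classical
  induction m generalizing t with
  | zero =>
    have hrel : ∀ b ∈ t, ∃ a ∈ s, r a b := fun b hb ↦ by
      simpa [Finset.Nonempty] using card_pos.1 (hk₀.trans_le (hk b hb))
    simpa using exists_subset_cover_card_le_card hrel
  | succ m ih =>
    obtain rfl | ⟨b₀, hb₀⟩ := t.eq_empty_or_nonempty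
    · refine ⟨∅, empty_subset s, by simp, ?_⟩
      simp only [card_empty, Nat.cast_zero, zero_mul, add_zero]
      positivity
    have hks : k ≤ #s := (hk b₀ hb₀).trans (card_filter_le s fun a ↦ r a b₀)
    have hratio : (0 : ℝ) ≤ 1 - k / #s :=
      sub_nonneg.2 (div_le_one_of_le₀ (by exact_mod_cast hks) (by positivity))
    obtain ⟨a, ha, hleft⟩ := exists_card_filter_not_le (card_pos.1 (hk₀.trans_le hks)) hk
    obtain ⟨D, hDs, hD, hcard⟩ := ih (t := {b ∈ t | ¬ r a b}) fun b hb ↦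
      hk b (mem_of_mem_filter b hb)
    refine ⟨insert a D, insert_subset ha hDs, fun b hb ↦ ?_, ?_⟩
    · by_cases hab : r a b
      · exact ⟨a, mem_insert_self a D, hab⟩
      · obtain ⟨d, hd, hdb⟩ := hD b (mem_filter.2 ⟨hb, hab⟩)
        exact ⟨d, mem_insert_of_mem hd, hdb⟩
    · calc (#(insert a D) : ℝ) ≤ #D + 1 := by exact_mod_cast card_insert_le a D
        _ ≤ m + #{b ∈ t | ¬ r a b} * (1 - k / #s) ^ m + 1 := by gcongr
        _ ≤ m + #t * (1 - k / #s) * (1 - k / #s) ^ m + 1 := by gcongr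
        _ = (m + 1 : ℕ) + #t * (1 - k / #s) ^ (m + 1) := by push_cast; ring

end Covering

lemma one_sub_pow_ceil_log_div_le {p x : ℝ} (hp : 0 < p) (hp₁ : p ≤ 1) (hx : 0 < x) :
    (1 - p) ^ ⌈Real.log x / p⌉₊ ≤ x⁻¹ :=
  calc (1 - p) ^ ⌈Real.log x / p⌉₊ ≤ Real.exp (-p) ^ ⌈Real.log x / p⌉₊ :=
        pow_le_pow_left₀ (sub_nonneg.2 hp₁) (Real.one_sub_le_exp_neg p) _
    _ = Real.exp (-(⌈Real.log x / p⌉₊ * p)) := by rw [← Real.exp_nat_mul, mul_neg]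
    _ ≤ Real.exp (-Real.log x) :=
        Real.exp_le_exp.2 (neg_le_neg ((div_le_iff₀ hp).1 (Nat.le_ceil _)))
    _ = x⁻¹ := by rw [Real.exp_neg, Real.exp_log hx]

lemma div_mul_one_add_log_add_one_le {k n : ℝ} (hk : 0 < k) (hkn : k ≤ n) :
    n / k * (1 + Real.log k) + 1 ≤ 2 * n / √k := by
  have hn : 0 < n := hk.trans_le hkn
  have hlog : Real.log k ≤ 2 * (√k - 1) := by
    have hlog_sqrt : Real.log k / 2 ≤ √k - 1 :=
      Real.log_sqrt hk.le ▸ Real.log_le_sub_one_of_pos (Real.sqrt_pos.2 hk)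
    linarith
  calc n / k * (1 + Real.log k) + 1 ≤ n / k * (1 + 2 * (√k - 1)) + n / k := by
        gcongr
        exact (one_le_div hk).2 hkn
    _ = 2 * n * (√k / k) := by ring
    _ = 2 * n / √k := by rw [Real.sqrt_div_self', mul_one_div]

lemma one_lt_log_of_three_le {x : ℝ} (hx : 3 ≤ x) : 1 < Real.log x :=
  (Real.lt_log_iff_exp_lt (by linarith)).2 (Real.exp_one_lt_three.trans_le hx)

lemma one_le_log_rpow_div_log_log {x p : ℝ} (hx : 3 ≤ x) (hp : 1 ≤ p) :
    1 ≤ Real.log x ^ p / Real.log (Real.log x) := by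
  have hlog : 1 < Real.log x := one_lt_log_of_three_le hx
  rw [one_le_div (Real.log_pos hlog)]
  calc Real.log (Real.log x) ≤ Real.log x ^ p / p :=
        Real.log_le_rpow_div (by positivity) (by positivity)
    _ ≤ Real.log x ^ p := div_le_self (by positivity) hp

section AddGroup

open Finset
open scoped Pointwise

variable {G : Type*} [AddGroup G] [Fintype G] [DecidableEq G] {S : Finset G}

lemma exists_add_eq_univ_card_le_add_mul_pow (hS : S.Nonempty) (m : ℕ) :
    ∃ D : Finset G, D + S = univ ∧
      (#D : ℝ) ≤ m + Fintype.card G * (1 - #S / Fintype.card G) ^ m := by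
  have hdegree (v : G) : #(univ.bipartiteBelow (fun d v ↦ -d + v ∈ S) v) = #S := by
    refine card_nbij' (fun d ↦ -d + v) (fun x ↦ v - x) ?_ ?_ ?_ ?_ <;>
      simp [Set.MapsTo, Set.LeftInvOn, bipartiteBelow, sub_eq_add_neg, add_assoc]
  obtain ⟨D, -, hD, hcard⟩ := exists_subset_cover_card_le_add_mul_pow (t := univ) hS.card_pos
    (fun v _ ↦ (hdegree v).ge) m
  refine ⟨D, eq_univ_of_forall fun v ↦ ?_, hcard⟩
  obtain ⟨d, hd, hdv⟩ := hD v (mem_univ v)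
  exact mem_add.2 ⟨d, hd, -d + v, hdv, add_neg_cancel_left d v⟩

theorem exists_add_eq_univ_card_le (hS : S.Nonempty) :
    ∃ D : Finset G, D + S = univ ∧
      (#D : ℝ) ≤ Fintype.card G / #S * (1 + Real.log #S) + 1 := by
  set n := Fintype.card G
  have hk : (0 : ℝ) < #S := by exact_mod_cast hS.card_pos
  have hkn : (#S : ℝ) ≤ n := by exact_mod_cast card_le_univ S
  set m := ⌈Real.log #S / (#S / n : ℝ)⌉₊
  have hm : (m : ℝ) ≤ Real.log #S / (#S / n) + 1 :=
    (Nat.ceil_lt_add_one (div_nonneg (Real.log_natCast_nonneg _) (by positivity))).le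
  have hleft : (1 - #S / n : ℝ) ^ m ≤ (#S : ℝ)⁻¹ :=
    one_sub_pow_ceil_log_div_le (div_pos hk (hk.trans_le hkn))
      (div_le_one_of_le₀ hkn n.cast_nonneg) hk
  obtain ⟨D, hD, hcard⟩ := exists_add_eq_univ_card_le_add_mul_pow hS m
  refine ⟨D, hD, ?_⟩
  calc (#D : ℝ) ≤ m + n * (1 - #S / n) ^ m := hcard
    _ ≤ (Real.log #S / (#S / n) + 1) + n * (#S : ℝ)⁻¹ := by gcongr
    _ = n / #S * (1 + Real.log #S) + 1 := by rw [div_div_eq_mul_div]; ring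

theorem exists_small_dominating_set_general {p : ℝ} (hp : 1 ≤ p) (hG : 3 ≤ Fintype.card G)
    (hS : S.Nonempty) :
    ∃ D : Finset G, D + S = univ ∧
      (#D : ℝ) ≤ 2 * Fintype.card G * Real.log (Fintype.card G) ^ p /
        ((#S : ℝ) ^ ((1 : ℝ) / 2) * Real.log (Real.log (Fintype.card G))) := by
  set n := Fintype.card G
  have hk : (0 : ℝ) < #S := by exact_mod_cast hS.card_pos
  have hkn : (#S : ℝ) ≤ n := by exact_mod_cast card_le_univ S
  obtain ⟨D, hD, hcard⟩ := exists_add_eq_univ_card_le hS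
  refine ⟨D, hD, ?_⟩
  calc (#D : ℝ) ≤ n / #S * (1 + Real.log #S) + 1 := hcard
    _ ≤ 2 * n / √(#S) := div_mul_one_add_log_add_one_le hk hkn
    _ ≤ 2 * n / √(#S) * (Real.log n ^ p / Real.log (Real.log n)) :=
      le_mul_of_one_le_right (by positivity)
        (one_le_log_rpow_div_log_log (by exact_mod_cast hG) hp)
    _ = _ := by rw [Real.sqrt_eq_rpow, div_mul_div_comm]

end AddGroup

/-- There exist `C > 0` and `n₀` such that for every `n ≥ n₀` and every
nonempty set `S` of nonzero residues mod `n` (of cardinality `k = #S ≥ 1`), there is a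
dominating set `D` of the circulant graph `C_n(S)` with
`#D ≤ C · n (log n)^{5/2} / (k^{1/2} · log log n)`. -/
theorem exists_small_dominating_set :
    ∃ C : ℝ, C > 0 ∧ ∃ n₀ : ℕ, ∀ n : ℕ, n₀ ≤ n →
      ∀ S : Finset (ZMod n), (0 : ZMod n) ∉ S → S.Nonempty →
        ∃ D : Finset (ZMod n),
          (∀ v : ZMod n, v ∈ D ∨ ∃ d ∈ D, ∃ s ∈ S, v = d + s) ∧
          (D.card : ℝ) ≤ C * n * (Real.log n) ^ ((5 : ℝ) / 2) /
              ((S.card : ℝ) ^ ((1 : ℝ) / 2) * Real.log (Real.log n)) := by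
  refine ⟨2, two_pos, 3, fun n hn S _ hS ↦ ?_⟩
  have : NeZero n := ⟨by lia⟩
  obtain ⟨D, hD, hcard⟩ := exists_small_dominating_set_general (p := 5 / 2)
    (by norm_num) (by rwa [ZMod.card]) hS
  refine ⟨D, fun v ↦ .inr ?_, by rwa [ZMod.card] at hcard⟩
  simpa only [Finset.mem_add, eq_comm] using Finset.eq_univ_iff_forall.1 hD v
end

section
/- Let n ≥ 2 and let L be a positive integer with L < 0.5·n^{1/2}. If (k₁, ℓ₁) and (k₂, ℓ₂) are two pairs with 1 ≤ k₁, k₂ ≤ L and ℓ₁, ℓ₂ primes in (L, 2L] coprime to n, and k₁·ℓ₁^{-1} ≡ k₂·ℓ₂^{-1} (mod n) (inverses taken modulo n), then (k₁, ℓ₁) = (k₂, ℓ₂). In other words, the map (k, ℓ) ↦ k·ℓ^{-1} mod n is injective on [1, L] × 𝓛. -/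
/-! Multiplying out `k₁ / ℓ₁ ≡ k₂ / ℓ₂` gives `k₁ ℓ₂ ≡ k₂ ℓ₁ (mod n)`. Both sides are smaller
than `n`, so this is an equality of integers, i.e. `k₁ / ℓ₁ = k₂ / ℓ₂` in `ℚ`; both fractions are
in lowest terms, hence identical. For `0 < k < ℓ` with `ℓ` prime, `k / ℓ` is in lowest terms. -/

theorem zmod_mul_inv_eq_mul_inv_iff {n : ℕ} {a b c d : ZMod n} (hb : IsUnit b) (hd : IsUnit d) :
    a * b⁻¹ = c * d⁻¹ ↔ a * d = c * b := by
  lift b to (ZMod n)ˣ using hb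
  lift d to (ZMod n)ˣ using hd
  rw [ZMod.inv_coe_unit, ZMod.inv_coe_unit, Units.mul_inv_eq_mul_inv_iff]

theorem eq_and_eq_of_coprime_of_mul_eq_mul {a b c d : ℕ} (hab : a.Coprime b) (hcd : c.Coprime d)
    (h : a * d = c * b) : a = c ∧ b = d :=
  ⟨Nat.dvd_antisymm (hab.dvd_of_dvd_mul_right (Dvd.intro d h))
      (hcd.dvd_of_dvd_mul_right (Dvd.intro b h.symm)),
    Nat.dvd_antisymm (hab.symm.dvd_of_dvd_mul_left (Dvd.intro_left c h.symm))
      (hcd.symm.dvd_of_dvd_mul_left (Dvd.intro_left a h))⟩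

theorem mul_two_mul_lt_of_lt_half_sqrt {n L : ℕ} (h : (L : ℝ) < 0.5 * √n) : L * (2 * L) < n := by
  have hsqrt : ((2 * L : ℕ) : ℝ) < √n := by
    push_cast
    linarith
  have hsq : (2 * L) ^ 2 < n := by
    exact_mod_cast (Real.lt_sqrt (Nat.cast_nonneg _)).1 hsqrt
  calc L * (2 * L) ≤ (2 * L) ^ 2 := by nlinarith
    _ < n := hsq

theorem klinv_injective_general {n K M k₁ k₂ ℓ₁ ℓ₂ : ℕ} (hKM : K * M < n)
    (hk₁ : k₁ ≤ K) (hk₂ : k₂ ≤ K) (hℓ₁ : ℓ₁ ≤ M) (hℓ₂ : ℓ₂ ≤ M)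
    (hℓ₁n : ℓ₁.Coprime n) (hℓ₂n : ℓ₂.Coprime n)
    (hkℓ₁ : k₁.Coprime ℓ₁) (hkℓ₂ : k₂.Coprime ℓ₂)
    (heq : (k₁ : ZMod n) * (ℓ₁ : ZMod n)⁻¹ = (k₂ : ZMod n) * (ℓ₂ : ZMod n)⁻¹) :
    k₁ = k₂ ∧ ℓ₁ = ℓ₂ := by
  have hcast : ((k₁ * ℓ₂ : ℕ) : ZMod n) = (k₂ * ℓ₁ : ℕ) := by
    push_cast
    rwa [← zmod_mul_inv_eq_mul_inv_iff ((ZMod.isUnit_iff_coprime _ _).2 hℓ₁n)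
      ((ZMod.isUnit_iff_coprime _ _).2 hℓ₂n)]
  have hcross : k₁ * ℓ₂ = k₂ * ℓ₁ :=
    CharP.natCast_injOn_Iio (ZMod n) n ((Nat.mul_le_mul hk₁ hℓ₂).trans_lt hKM)
      ((Nat.mul_le_mul hk₂ hℓ₁).trans_lt hKM) hcast
  exact eq_and_eq_of_coprime_of_mul_eq_mul hkℓ₁ hkℓ₂ hcross

/-- For `n ≥ 2` and a positive integer `L < 0.5·n^{1/2}`, the map
`(k, ℓ) ↦ k·ℓ⁻¹ mod n` is injective on `[1, L] × 𝓛`, where `𝓛` is the set of primes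
in `(L, 2L]` coprime to `n`. -/
theorem klinv_injective (n L : ℕ) (hn : 2 ≤ n) (hL : 0 < L)
    (hL2 : (L : ℝ) < 0.5 * Real.sqrt n)
    (k₁ k₂ ℓ₁ ℓ₂ : ℕ)
    (hk₁ : 1 ≤ k₁) (hk₁' : k₁ ≤ L) (hk₂ : 1 ≤ k₂) (hk₂' : k₂ ≤ L)
    (hℓ₁p : Nat.Prime ℓ₁) (hℓ₁ : L < ℓ₁) (hℓ₁' : ℓ₁ ≤ 2 * L) (hℓ₁n : Nat.Coprime ℓ₁ n)
    (hℓ₂p : Nat.Prime ℓ₂) (hℓ₂ : L < ℓ₂) (hℓ₂' : ℓ₂ ≤ 2 * L) (hℓ₂n : Nat.Coprime ℓ₂ n)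
    (heq : (k₁ : ZMod n) * (ℓ₁ : ZMod n)⁻¹ = (k₂ : ZMod n) * (ℓ₂ : ZMod n)⁻¹) :
    k₁ = k₂ ∧ ℓ₁ = ℓ₂ := by
  exact klinv_injective_general (mul_two_mul_lt_of_lt_half_sqrt hL2) hk₁' hk₂' hℓ₁' hℓ₂' hℓ₁n hℓ₂n
    (Nat.coprime_of_lt_prime (Nat.ne_zero_of_lt hk₁) (hk₁'.trans_lt hℓ₁) hℓ₁p).symm
    (Nat.coprime_of_lt_prime (Nat.ne_zero_of_lt hk₂) (hk₂'.trans_lt hℓ₂) hℓ₂p).symm heq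
end

section
/- There exist constants C > 0 and n₀ such that for every integer n ≥ n₀, every positive integer L ≤ n, every integer a with a ≢ 0 (mod n), and every real Z with 1 ≤ Z ≤ n, the number of primes ℓ with L < ℓ ≤ 2L, gcd(ℓ, n) = 1, and |ρ_n(a/ℓ)| < Z is at most C · (LZ/n + 1) · log n / log log n. -/
/-- The set `𝓛 = 𝓛(n, L)` of primes `ℓ` with `L < ℓ ≤ 2L` and `gcd(ℓ, n) = 1`. -/
def calL (n L : ℕ) : Finset ℕ :=
  (Finset.Ioc L (2 * L)).filter fun ℓ => Nat.Prime ℓ ∧ Nat.Coprime ℓ n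

/-- `ρ_n(x)`: the unique integer `w` with `w ≡ x (mod n)` and `-n/2 < w ≤ n/2`. -/
def rho (n : ℕ) (x : ZMod n) : ℤ :=
  if 2 * x.val ≤ n then (x.val : ℤ) else (x.val : ℤ) - n

/-!
For a prime `ℓ` counted here, `m = ℓ ρ_n(a/ℓ)` is an integer congruent to `a` modulo `n` with
`|m| < 2LZ`, so `m` takes `O(LZ/n + 1)` values, none of them `0`. If `q` and `p ≠ q` give the same
`m = q ρ_n(a/q)`, then `p` divides `ρ_n(a/q)`, a nonzero integer of size at most `n`. Hence at most
`1 + max_{0 < r ≤ n} ω(r) = O(log n / log log n)` primes share a value of `m`. Dividing out `q`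
makes this bound independent of `L` and `Z`.
-/

section Factorial

open Finset Nat

lemma factorial_card_le_prod {s : Finset ℕ} (hs : ∀ x ∈ s, 0 < x) : (#s)! ≤ ∏ x ∈ s, x := by
  induction s using Finset.induction_on_max with
  | empty => simp
  | insert m s hm ih =>
    have hms : m ∉ s := fun h => (hm m h).false
    have hpos : ∀ x ∈ s, 0 < x := fun x hx => hs x (mem_insert_of_mem hx)
    have hcard : #s + 1 ≤ m := by
      have hsub : insert m s ⊆ Ioc 0 m := fun x hx =>
        mem_Ioc.2 ⟨hs x hx, (mem_insert.1 hx).elim le_of_eq fun h => (hm x h).le⟩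
      simpa [hms] using card_le_card hsub
    rw [card_insert_of_notMem hms, prod_insert hms, factorial_succ]
    exact Nat.mul_le_mul hcard (ih hpos)

lemma factorial_card_le_of_prime_dvd {s : Finset ℕ} {m : ℕ} (hm : m ≠ 0)
    (hs : ∀ p ∈ s, p.Prime ∧ p ∣ m) : (#s)! ≤ m :=
  (factorial_card_le_prod fun p hp => (hs p hp).1.pos).trans <|
    Nat.le_of_dvd (Nat.pos_of_ne_zero hm) <|
      Finset.prod_primes_dvd m (fun p hp => (hs p hp).1.prime) fun p hp => (hs p hp).2

lemma factorial_card_sub_one_le_of_prime_dvd_mul {s : Finset ℕ} {q r : ℕ} (hq : q ∈ s)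
    (hr : r ≠ 0) (hs : ∀ p ∈ s, p.Prime ∧ p ∣ q * r) : (#s - 1)! ≤ r := by
  rw [← card_erase_of_mem hq]
  refine factorial_card_le_of_prime_dvd hr fun p hp => ?_
  obtain ⟨hpq, hps⟩ := mem_erase.1 hp
  obtain ⟨hp, hdvd⟩ := hs p hps
  have hcop : p.Coprime q := (coprime_primes hp (hs q hq).1).2 hpq
  exact ⟨hp, hcop.dvd_of_dvd_mul_left hdvd⟩

end Factorial

section Logarithm

open Real
open scoped Nat

lemma log_log_pos {x : ℝ} (hx : 3 ≤ x) : 0 < log (log x) := by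
  refine log_pos ((lt_log_iff_exp_lt (by linarith)).2 ?_)
  linarith [exp_one_lt_d9]

lemma mul_log_sub_self_le_log_factorial (k : ℕ) : k * log k - k ≤ log k ! := by
  obtain rfl | hk := eq_or_ne k 0
  · simp
  have hlog : 0 ≤ log k := log_natCast_nonneg k
  have hlog2pi : 0 ≤ log (2 * π) := log_nonneg (by linarith [pi_gt_three])
  linarith [Stirling.le_log_factorial_stirling hk]

lemma mul_log_sub_log_le_sub {x y : ℝ} (hx : 0 < x) (hy : 0 < y) :
    x * (log y - log x) ≤ y - x := by
  rw [← log_div hy.ne' hx.ne']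
  calc x * log (y / x) ≤ x * (y / x - 1) := by
        gcongr
        exact log_le_sub_one_of_pos (div_pos hy hx)
    _ = y - x := by field_simp

lemma mul_log_log_le_of_factorial_le {k n : ℕ} (h : k ! ≤ n) :
    k * log (log n) ≤ 2 * log n := by
  have hlog_factorial : log k ! ≤ log n :=
    log_le_log (mod_cast k.factorial_pos) (mod_cast h)
  obtain hx | hx := (log_natCast_nonneg n).eq_or_lt
  · simp [← hx]
  obtain rfl | hk := k.eq_zero_or_pos
  · simpa using hx.le
  linarith [mul_log_sub_self_le_log_factorial k,
    mul_log_sub_log_le_sub (Nat.cast_pos.2 hk : (0 : ℝ) < k) hx]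

lemma mul_log_log_le_of_factorial_sub_one_le {k n : ℕ} (h : (k - 1)! ≤ n) :
    k * log (log n) ≤ 3 * log n := by
  have hlog : 0 ≤ log n := log_natCast_nonneg n
  have hloglog : log (log n) ≤ log n := log_le_self hlog
  obtain _ | k := k
  · simpa using hlog
  · have := mul_log_log_le_of_factorial_le h
    push_cast [Nat.add_sub_cancel] at this ⊢
    linarith

end Logarithm

section Residues

open Finset

lemma card_Ioc_filter_modEq_le {a b r : ℤ} (hab : a ≤ b) (hr : 0 < r) (v : ℤ) :
    (#{x ∈ Ioc a b | x ≡ v [ZMOD r]} : ℚ) ≤ (b - a) / r + 1 := by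
  have hcard : (#{x ∈ Ioc a b | x ≡ v [ZMOD r]} : ℚ) =
      max ((⌊(b - v) / (r : ℚ)⌋ : ℚ) - ⌊(a - v) / (r : ℚ)⌋) 0 :=
    mod_cast Int.Ioc_filter_modEq_card a b hr v
  have hlength : 0 ≤ (b - a) / (r : ℚ) :=
    div_nonneg (sub_nonneg.2 (mod_cast hab)) (mod_cast hr.le)
  have hsub : (b - a) / (r : ℚ) = (b - v) / r - (a - v) / r := by ring
  rw [hcard]
  refine max_le ?_ (by linarith)
  linarith [Int.floor_le ((b - v) / (r : ℚ)), Int.lt_floor_add_one ((a - v) / (r : ℚ))]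

lemma card_le_of_modEq_of_abs_le {s : Finset ℤ} {r v : ℤ} {B : ℝ} (hr : 0 < r) (hB : 0 ≤ B)
    (hmod : ∀ x ∈ s, x ≡ v [ZMOD r]) (habs : ∀ x ∈ s, |(x : ℝ)| ≤ B) :
    (#s : ℝ) ≤ 2 * B / r + 2 := by
  have hsub : s ⊆ {x ∈ Ioc (-⌊B⌋ - 1) ⌊B⌋ | x ≡ v [ZMOD r]} := fun x hx => by
    have hfloor : |x| ≤ ⌊B⌋ := Int.le_floor.2 (mod_cast habs x hx)
    have := abs_le.1 hfloor
    exact mem_filter.2 ⟨mem_Ioc.2 ⟨by lia, this.2⟩, hmod x hx⟩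
  have hfloor : 0 ≤ ⌊B⌋ := Int.floor_nonneg.2 hB
  have hcard : (#s : ℝ) ≤ (⌊B⌋ - (-⌊B⌋ - 1)) / r + 1 := by
    have := (Nat.cast_le.2 (card_le_card hsub)).trans
      (card_Ioc_filter_modEq_le (by lia : -⌊B⌋ - 1 ≤ ⌊B⌋) hr v)
    exact_mod_cast this
  have hr' : (1 : ℝ) ≤ r := mod_cast hr
  calc (#s : ℝ) ≤ (⌊B⌋ - (-⌊B⌋ - 1)) / r + 1 := hcard
    _ = 2 * ⌊B⌋ / r + 1 / r + 1 := by ring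
    _ ≤ 2 * B / r + 1 + 1 := by
        gcongr
        · exact Int.floor_le B
        · exact div_le_one_of_le₀ hr' (by linarith)
    _ = 2 * B / r + 2 := by ring

open scoped Classical in
lemma card_filter_bind_pure_le.{u} {α β : Type u} (s : Finset α) (f : α → β) (P : β → Prop)
    [DecidablePred P] : #{y ∈ s >>= fun x => pure (f x) | P y} ≤ #{x ∈ s | P (f x)} := by
  have himage : (s >>= fun x => pure (f x)) = s.image f := sup_singleton_apply s f
  rw [himage, filter_image]
  exact card_image_le

end Residues

section Rho

open Finset

variable {n L : ℕ} {a : ℤ}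

lemma rho_eq_valMinAbs [NeZero n] (x : ZMod n) : rho n x = x.valMinAbs := by
  simp only [ZMod.valMinAbs_def_pos, rho, Nat.le_div_iff_mul_le two_pos, mul_comm]

lemma natAbs_rho_le [NeZero n] (x : ZMod n) : (rho n x).natAbs ≤ n := by
  rw [rho_eq_valMinAbs]
  exact x.natAbs_valMinAbs_le.trans (n.div_le_self 2)

/-- The integer `ℓ ρ_n(a/ℓ)`, a representative of `a` modulo `n` when `ℓ` is coprime to `n`. -/
def rhoMultiple (n : ℕ) (a : ℤ) (l : ℕ) : ℤ := l * rho n (a * (l : ZMod n)⁻¹)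

open scoped Classical in
/-- The primes `ℓ ∈ 𝓛(n, L)` with `|ρ_n(a/ℓ)| < Z`, as natural numbers rather than as residues
modulo `n`. -/
noncomputable def smallRhoPrimes (n L : ℕ) (a : ℤ) (Z : ℝ) : Finset ℕ :=
  {l ∈ calL n L | (|rho n (a * (l : ZMod n)⁻¹)| : ℝ) < Z}

lemma prime_and_coprime_of_mem_calL {l : ℕ} (hl : l ∈ calL n L) : l.Prime ∧ l.Coprime n :=
  (mem_filter.1 hl).2

lemma le_two_mul_of_mem_calL {l : ℕ} (hl : l ∈ calL n L) : l ≤ 2 * L :=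
  (mem_Ioc.1 (mem_filter.1 hl).1).2

lemma abs_rhoMultiple_le {Z : ℝ} {l : ℕ} (hl : l ∈ smallRhoPrimes n L a Z) :
    |(rhoMultiple n a l : ℝ)| ≤ 2 * (L * Z) := by
  obtain ⟨hl, hrho⟩ := mem_filter.1 hl
  have hlL : (l : ℝ) ≤ 2 * L := mod_cast le_two_mul_of_mem_calL hl
  rw [rhoMultiple, Int.cast_mul, Int.cast_natCast, abs_mul, Nat.abs_cast, ← mul_assoc]
  gcongr

variable [NeZero n]

lemma rhoMultiple_modEq {l : ℕ} (hl : l.Coprime n) : rhoMultiple n a l ≡ a [ZMOD n] := by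
  rw [← ZMod.intCast_eq_intCast_iff, rhoMultiple, rho_eq_valMinAbs, Int.cast_mul,
    ZMod.coe_valMinAbs, Int.cast_natCast, mul_left_comm, ZMod.coe_mul_inv_eq_one l hl, mul_one]

lemma rhoMultiple_ne_zero {l : ℕ} (ha : ¬ (n : ℤ) ∣ a) (hl : l.Coprime n) :
    rhoMultiple n a l ≠ 0 := fun h =>
  ha (Int.modEq_zero_iff_dvd.1 (h ▸ (rhoMultiple_modEq hl).symm))

lemma factorial_card_rhoMultiple_fiber_sub_one_le (ha : ¬ (n : ℤ) ∣ a) (m : ℤ) :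
    (#{l ∈ calL n L | rhoMultiple n a l = m} - 1).factorial ≤ n := by
  obtain hempty | ⟨q, hq⟩ := {l ∈ calL n L | rhoMultiple n a l = m}.eq_empty_or_nonempty
  · rw [hempty]
    exact NeZero.one_le
  obtain ⟨hqL, hqm⟩ := mem_filter.1 hq
  have hrho : rho n (a * (q : ZMod n)⁻¹) ≠ 0 :=
    right_ne_zero_of_mul (rhoMultiple_ne_zero ha (prime_and_coprime_of_mem_calL hqL).2)
  refine (factorial_card_sub_one_le_of_prime_dvd_mul hq (Int.natAbs_ne_zero.2 hrho)
    fun p hp => ?_).trans (natAbs_rho_le _)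
  obtain ⟨hpL, hpm⟩ := mem_filter.1 hp
  refine ⟨(prime_and_coprime_of_mem_calL hpL).1, ?_⟩
  have hdvd : (p : ℤ) ∣ rhoMultiple n a q := (hpm.trans hqm.symm) ▸ dvd_mul_right _ _
  simpa only [rhoMultiple, Int.natCast_dvd, Int.natAbs_mul, Int.natAbs_natCast] using hdvd

lemma card_image_rhoMultiple_le {Z : ℝ} (hZ : 0 ≤ Z) :
    (#((smallRhoPrimes n L a Z).image (rhoMultiple n a)) : ℝ) ≤ 4 * (L * Z / n + 1) := by
  have hn : (0 : ℤ) < n := mod_cast NeZero.pos n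
  have hcard : (#((smallRhoPrimes n L a Z).image (rhoMultiple n a)) : ℝ) ≤
      2 * (2 * (L * Z)) / (n : ℤ) + 2 :=
    card_le_of_modEq_of_abs_le (v := a) hn (by positivity)
      (forall_mem_image.2 fun l hl =>
        rhoMultiple_modEq (prime_and_coprime_of_mem_calL (mem_filter.1 hl).1).2)
      (forall_mem_image.2 fun l hl => abs_rhoMultiple_le hl)
  push_cast at hcard
  linear_combination hcard

end Rho

open Finset in
theorem count_small_rho_general {n L : ℕ} (hn : 3 ≤ n) {a : ℤ} (ha : ¬ (n : ℤ) ∣ a)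
    {Z : ℝ} (hZ : 0 ≤ Z) :
    (#(smallRhoPrimes n L a Z) : ℝ) ≤
      12 * (L * Z / n + 1) * Real.log n / Real.log (Real.log n) := by
  have : NeZero n := ⟨by lia⟩
  have hloglog : 0 < Real.log (Real.log n) := log_log_pos (mod_cast hn)
  set K := 3 * Real.log n / Real.log (Real.log n) with hK
  have hfiber (m : ℤ) : (#{l ∈ smallRhoPrimes n L a Z | rhoMultiple n a l = m} : ℝ) ≤ K := by
    have hsub : {l ∈ smallRhoPrimes n L a Z | rhoMultiple n a l = m} ⊆
        {l ∈ calL n L | rhoMultiple n a l = m} := filter_subset_filter _ (filter_subset _ _)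
    refine (Nat.cast_le.2 (card_le_card hsub)).trans ((le_div_iff₀ hloglog).2 ?_)
    exact mul_log_log_le_of_factorial_sub_one_le
      (factorial_card_rhoMultiple_fiber_sub_one_le ha m)
  calc (#(smallRhoPrimes n L a Z) : ℝ)
      = ∑ m ∈ (smallRhoPrimes n L a Z).image (rhoMultiple n a),
          (#{l ∈ smallRhoPrimes n L a Z | rhoMultiple n a l = m} : ℝ) :=
        mod_cast card_eq_sum_card_image (rhoMultiple n a) _
    _ ≤ #((smallRhoPrimes n L a Z).image (rhoMultiple n a)) * K := by
        simpa only [nsmul_eq_mul] using sum_le_card_nsmul _ _ K fun m _ => hfiber m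
    _ ≤ 4 * (L * Z / n + 1) * K := by
        gcongr
        exact card_image_rhoMultiple_le hZ
    _ = 12 * (L * Z / n + 1) * Real.log n / Real.log (Real.log n) := by rw [hK]; ring

open scoped Classical in
/-- There exist `C > 0` and `n₀` such that for every `n ≥ n₀`, every positive
integer `L ≤ n`, every integer `a ≢ 0 (mod n)`, and every real `1 ≤ Z ≤ n`, the number of
primes `ℓ ∈ 𝓛` with `|ρ_n(a/ℓ)| < Z` is at most `C (LZ/n + 1) log n / log log n`. -/
theorem count_small_rho :
    ∃ C : ℝ, C > 0 ∧ ∃ n₀ : ℕ, ∀ n : ℕ, n₀ ≤ n →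
      ∀ L : ℕ, 0 < L → L ≤ n → ∀ a : ℤ, ¬ ((n : ℤ) ∣ a) → ∀ Z : ℝ, 1 ≤ Z → Z ≤ n →
        ((((calL n L).filter fun ℓ =>
            (|rho n ((a : ZMod n) * (ℓ : ZMod n)⁻¹)| : ℝ) < Z).card : ℝ)
          ≤ C * ((L : ℝ) * Z / n + 1) * Real.log n / Real.log (Real.log n)) := by
  refine ⟨12, by norm_num, 3, fun n hn L _ _ a ha Z hZ _ => ?_⟩
  -- The binder `ℓ` of the filter has type `ZMod n`, so `calL n L` is coerced through `>>=` and the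
  -- count is one of residues; these are as many as the primes because `L ≤ n`.
  exact (Nat.cast_le.2 (card_filter_bind_pure_le (calL n L) _ _)).trans
    (count_small_rho_general hn ha (zero_le_one.trans hZ))
end

section
/- There exist constants C > 0 and n₀ such that the following holds. Let n ≥ n₀, let L be a positive integer with L < 0.5·n^{1/2}, let W = W(n, L), and let S ⊆ Z_n be an arbitrary nonempty set. Let U be the set of u ∈ Z_n that cannot be represented as u = s + w with (s, w) ∈ S × W. Then #U · #S · (#𝓛)^{2} · (log log n)^{2} ≤ C · n^{2} (log n)^{4}; equivalently, if 𝓛 is nonempty, #U ≤ C · n^{2} (log n)^{4} / (#S · (#𝓛)^{2} · (log log n)^{2}). -/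
/-- The set `W = W(n, L) = {k·ℓ⁻¹ mod n : 1 ≤ k ≤ L, ℓ ∈ 𝓛} ⊆ Z_n`. -/
def calW (n L : ℕ) : Finset (ZMod n) :=
  ((Finset.Icc 1 L) ×ˢ calL n L).image fun p => (p.1 : ZMod n) * (p.2 : ZMod n)⁻¹

section PrimeFactors

open Finset Real

open scoped Nat

theorem factorial_card_le_prod_id {s : Finset ℕ} (hs : ∀ i ∈ s, 0 < i) :
    (#s)! ≤ ∏ i ∈ s, i := by
  induction s using Finset.induction_on_max with
  | empty => simp
  | insert a s hmax ih =>
    have ha : a ∉ s := fun h => (hmax a h).false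
    have hsub : s ⊆ Ioo 0 a := fun i hi =>
      mem_Ioo.2 ⟨hs i (mem_insert_of_mem hi), hmax i hi⟩
    have hcard : #s ≤ a - 0 - 1 := (card_le_card hsub).trans_eq (Nat.card_Ioo 0 a)
    have ha_pos : 0 < a := hs a (mem_insert_self a s)
    rw [card_insert_of_notMem ha, prod_insert ha, Nat.factorial_succ]
    exact Nat.mul_le_mul (by lia) (ih fun i hi => hs i (mem_insert_of_mem hi))

theorem factorial_card_le_of_subset_primeFactors {m : ℕ} (hm : m ≠ 0) {s : Finset ℕ}
    (hs : s ⊆ m.primeFactors) : (#s)! ≤ m :=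
  calc
    (#s)! ≤ ∏ p ∈ s, p :=
      factorial_card_le_prod_id fun _ hp => Nat.pos_of_mem_primeFactors (hs hp)
    _ ≤ m := Nat.le_of_dvd hm.bot_lt <|
      (prod_dvd_prod_of_subset _ _ _ hs).trans (Nat.prod_primeFactors_dvd m)

/-- With `x = log m` this is the classical bound `ω(m) ≪ log m / log log m`. -/
theorem card_mul_log_le_of_subset_primeFactors {m : ℕ} (hm : m ≠ 0) {s : Finset ℕ}
    (hs : s ⊆ m.primeFactors) {x : ℝ} (hx : 0 < x) : #s * log x ≤ x + log m := by
  have hfac : ((#s)! : ℝ) ≤ m := by exact_mod_cast factorial_card_le_of_subset_primeFactors hm hs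
  have hpow : x ^ #s ≤ exp x * m :=
    calc
      x ^ #s ≤ exp x * (#s)! :=
        (div_le_iff₀ (by positivity)).1 (pow_div_factorial_le_exp x hx.le _)
      _ ≤ exp x * m := by gcongr
  calc
    #s * log x = log (x ^ #s) := (log_pow _ _).symm
    _ ≤ log (exp x * m) := log_le_log (by positivity) hpow
    _ = x + log m := by rw [log_mul (exp_ne_zero x) (by exact_mod_cast hm), log_exp]

end PrimeFactors

section FiberSum

open Finset

variable {ι : Type*} {s : Finset ι} {f : ι → ℤ} {K : ℝ}

theorem card_filter_natAbs_eq_le (hK : ∀ z, (#{i ∈ s | f i = z} : ℝ) ≤ K) (j : ℕ) :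
    (#{i ∈ s | (f i).natAbs = j} : ℝ) ≤ 2 * K := by
  classical
  have hsub : {i ∈ s | (f i).natAbs = j} ⊆ {i ∈ s | f i = j} ∪ {i ∈ s | f i = -j} := by
    intro i hi
    simp only [mem_filter, mem_union, Int.natAbs_eq_iff] at hi ⊢
    tauto
  have hcard : (#{i ∈ s | (f i).natAbs = j} : ℝ) ≤ #{i ∈ s | f i = j} + #{i ∈ s | f i = -j} := by
    exact_mod_cast (card_le_card hsub).trans (card_union_le _ _)
  linarith [hK j, hK (-j)]

theorem sum_one_div_abs_add_one_le {N : ℕ} (hN : ∀ i ∈ s, |f i| ≤ N)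
    (hK : ∀ z, (#{i ∈ s | f i = z} : ℝ) ≤ K) :
    ∑ i ∈ s, 1 / (|(f i : ℝ)| + 1) ≤ 2 * K * harmonic (N + 1) := by
  have hmaps : ∀ i ∈ s, (f i).natAbs ∈ range (N + 1) := fun i hi => by
    have := hN i hi
    rw [Int.abs_eq_natAbs] at this
    rw [mem_range]
    lia
  have hfiber (j : ℕ) : ∑ i ∈ s with (f i).natAbs = j, 1 / (|(f i : ℝ)| + 1) =
      #{i ∈ s | (f i).natAbs = j} * ((j : ℝ) + 1)⁻¹ := by
    rw [← nsmul_eq_mul, ← sum_const]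
    refine sum_congr rfl fun i hi => ?_
    rw [← (mem_filter.1 hi).2, Nat.cast_natAbs, Int.cast_abs, one_div]
  calc
    ∑ i ∈ s, 1 / (|(f i : ℝ)| + 1)
      = ∑ j ∈ range (N + 1), #{i ∈ s | (f i).natAbs = j} * ((j : ℝ) + 1)⁻¹ := by
        rw [← sum_fiberwise_of_maps_to hmaps]
        exact sum_congr rfl fun j _ => hfiber j
    _ ≤ ∑ j ∈ range (N + 1), 2 * K * ((j : ℝ) + 1)⁻¹ := by
        gcongr with j
        exact card_filter_natAbs_eq_le hK j
    _ = 2 * K * harmonic (N + 1) := by simp [harmonic, mul_sum]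

end FiberSum

section CharacterSums

open Finset AddChar

open scoped ComplexConjugate

variable {G ι : Type*} [AddCommGroup G] [Finite G]

theorem sum_norm_sq_sum_addChar (S : Finset G) :
    ∑ ψ : AddChar G ℂ, ‖∑ s ∈ S, ψ s‖ ^ 2 = Nat.card G * #S := by
  classical
  have := Fintype.ofFinite G
  have hexpand (ψ : AddChar G ℂ) :
      ((‖∑ s ∈ S, ψ s‖ ^ 2 : ℝ) : ℂ) = ∑ s ∈ S, ∑ t ∈ S, ψ (s - t) := by
    rw [Complex.ofReal_pow, ← Complex.mul_conj', map_sum, sum_mul_sum]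
    simp only [sub_eq_add_neg, map_add_eq_mul, map_neg_eq_conj]
  have hswap : ∑ ψ : AddChar G ℂ, ((‖∑ s ∈ S, ψ s‖ ^ 2 : ℝ) : ℂ) =
      ∑ s ∈ S, ∑ t ∈ S, ∑ ψ : AddChar G ℂ, ψ (s - t) := by
    simp only [hexpand]
    rw [sum_comm]
    exact sum_congr rfl fun s _ => sum_comm
  have hdiag : ∑ s ∈ S, ∑ t ∈ S, ∑ ψ : AddChar G ℂ, ψ (s - t) = Nat.card G * #S := by
    simp +contextual [sum_apply_eq_ite, sub_eq_zero, mul_comm]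
  exact_mod_cast hswap.trans hdiag

variable {U S : Finset G} {P : Finset ι} {w : ι → G}

theorem sum_conj_sum_mul_sum_mul_sum_eq_zero
    (hU : ∀ u ∈ U, ∀ s ∈ S, ∀ p ∈ P, u ≠ s + w p) :
    ∑ ψ : AddChar G ℂ, conj (∑ u ∈ U, ψ u) * (∑ s ∈ S, ψ s) * ∑ p ∈ P, ψ (w p) = 0 := by
  have hexpand (ψ : AddChar G ℂ) :
      conj (∑ u ∈ U, ψ u) * (∑ s ∈ S, ψ s) * ∑ p ∈ P, ψ (w p) =
        ∑ u ∈ U, ∑ s ∈ S, ∑ p ∈ P, ψ (-u + s + w p) := by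
    rw [map_sum, sum_mul_sum, sum_mul]
    simp only [sum_mul_sum, map_add_eq_mul, map_neg_eq_conj]
  simp only [hexpand]
  rw [sum_comm]
  refine sum_eq_zero fun u hu => ?_
  rw [sum_comm]
  refine sum_eq_zero fun s hs => ?_
  rw [sum_comm]
  refine sum_eq_zero fun p hp => sum_apply_eq_zero_iff_ne_zero.2 ?_
  rw [add_assoc, neg_add_eq_sub, sub_ne_zero]
  exact (hU u hu s hs p hp).symm

theorem card_mul_card_mul_card_le_mul_sum
    (hU : ∀ u ∈ U, ∀ s ∈ S, ∀ p ∈ P, u ≠ s + w p) {M : ℝ}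
    (hM : ∀ ψ : AddChar G ℂ, ψ ≠ 0 → ‖∑ p ∈ P, ψ (w p)‖ ≤ M) :
    (#U * #S * #P : ℝ) ≤
      M * ∑ ψ : AddChar G ℂ with ψ ≠ 0, ‖∑ u ∈ U, ψ u‖ * ‖∑ s ∈ S, ψ s‖ := by
  classical
  set F : AddChar G ℂ → ℂ :=
    fun ψ => conj (∑ u ∈ U, ψ u) * (∑ s ∈ S, ψ s) * ∑ p ∈ P, ψ (w p)
  have hsum : F 0 + ∑ ψ : AddChar G ℂ with ψ ≠ 0, F ψ = 0 := by
    rw [filter_ne', add_sum_erase _ _ (mem_univ _)]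
    exact sum_conj_sum_mul_sum_mul_sum_eq_zero hU
  have hF0 : F 0 = #U * #S * #P := by simp [F]
  calc
    (#U * #S * #P : ℝ) = ‖F 0‖ := by simp [hF0]
    _ = ‖∑ ψ : AddChar G ℂ with ψ ≠ 0, F ψ‖ := by rw [eq_neg_of_add_eq_zero_left hsum, norm_neg]
    _ ≤ ∑ ψ : AddChar G ℂ with ψ ≠ 0, ‖F ψ‖ := norm_sum_le _ _
    _ ≤ ∑ ψ : AddChar G ℂ with ψ ≠ 0, M * (‖∑ u ∈ U, ψ u‖ * ‖∑ s ∈ S, ψ s‖) := by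
      refine sum_le_sum fun ψ hψ => ?_
      rw [norm_mul, norm_mul, RCLike.norm_conj, mul_comm]
      gcongr
      exact hM ψ (mem_filter.1 hψ).2
    _ = _ := (mul_sum _ _ _).symm

theorem card_mul_card_mul_card_sq_le
    (hU : ∀ u ∈ U, ∀ s ∈ S, ∀ p ∈ P, u ≠ s + w p) {M : ℝ}
    (hM : ∀ ψ : AddChar G ℂ, ψ ≠ 0 → ‖∑ p ∈ P, ψ (w p)‖ ≤ M) :
    (#U * #S * #P ^ 2 : ℝ) ≤ (Nat.card G * M) ^ 2 := by
  have hcs : (∑ ψ : AddChar G ℂ with ψ ≠ 0, ‖∑ u ∈ U, ψ u‖ * ‖∑ s ∈ S, ψ s‖) ^ 2 ≤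
      (Nat.card G * #U) * (Nat.card G * #S) := by
    refine (sum_mul_sq_le_sq_mul_sq _ _ _).trans ?_
    rw [← sum_norm_sq_sum_addChar U, ← sum_norm_sq_sum_addChar S]
    gcongr <;> exact filter_subset _ _
  have hsq : (#U * #S * #P : ℝ) ^ 2 ≤ M ^ 2 * ((Nat.card G * #U) * (Nat.card G * #S)) :=
    calc
      (#U * #S * #P : ℝ) ^ 2 ≤
          (M * ∑ ψ : AddChar G ℂ with ψ ≠ 0, ‖∑ u ∈ U, ψ u‖ * ‖∑ s ∈ S, ψ s‖) ^ 2 := by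
        exact pow_le_pow_left₀ (by positivity) (card_mul_card_mul_card_le_mul_sum hU hM) 2
      _ ≤ _ := by rw [mul_pow]; gcongr
  obtain hUS | hUS := (by positivity : (0 : ℝ) ≤ #U * #S).eq_or_lt
  · rw [← hUS, zero_mul]
    positivity
  · refine le_of_mul_le_mul_left ?_ hUS
    linear_combination hsq

end CharacterSums

section GeometricSum

open Finset ZMod

theorem norm_sum_Icc_pow_mul_norm_sub_one_le {𝕜 : Type*} [NormedField 𝕜] {z : 𝕜} (hz : ‖z‖ ≤ 1)
    (L : ℕ) : ‖∑ k ∈ Icc 1 L, z ^ k‖ * ‖z - 1‖ ≤ 2 := by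
  rw [← norm_mul, ← Ico_add_one_right_eq_Icc, geom_sum_Ico_mul z (Nat.le_add_left 1 L)]
  calc
    ‖z ^ (L + 1) - z ^ 1‖ ≤ ‖z‖ ^ (L + 1) + ‖z‖ ^ 1 := by
      rw [← norm_pow, ← norm_pow]
      exact norm_sub_le _ _
    _ ≤ 1 + 1 := by gcongr <;> exact pow_le_one₀ (norm_nonneg z) hz
    _ = 2 := one_add_one_eq_two

variable {n : ℕ} [NeZero n]

theorem two_mul_abs_valMinAbs_le (a : ZMod n) : 2 * |a.valMinAbs| ≤ n := by
  have := a.natAbs_valMinAbs_le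
  rw [Int.abs_eq_natAbs]
  lia

theorem four_mul_abs_valMinAbs_div_le_norm_stdAddChar_sub_one (b : ZMod n) :
    4 * |(b.valMinAbs : ℝ)| / n ≤ ‖stdAddChar b - 1‖ := by
  have hn : (0 : ℝ) < n := Nat.cast_pos.2 (NeZero.pos n)
  have hexp : stdAddChar b =
      Complex.exp (Complex.I * ((2 * Real.pi * b.valMinAbs / n : ℝ) : ℂ)) := by
    conv_lhs => rw [← b.coe_valMinAbs, stdAddChar_coe]
    congr 1
    push_cast
    ring
  have habs : |2 * Real.pi * b.valMinAbs / n / 2| = Real.pi * |(b.valMinAbs : ℝ)| / n := by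
    rw [mul_assoc, mul_div_assoc, mul_div_cancel_left₀ _ two_ne_zero, abs_div, abs_mul,
      abs_of_pos Real.pi_pos, abs_of_pos hn]
  have hsmall : |2 * Real.pi * b.valMinAbs / n / 2| ≤ Real.pi / 2 := by
    have : 2 * |(b.valMinAbs : ℝ)| ≤ n := by exact_mod_cast two_mul_abs_valMinAbs_le b
    rw [habs, div_le_div_iff₀ hn two_pos, mul_assoc, mul_comm _ 2]
    gcongr
  have hsin := Real.mul_abs_le_abs_sin hsmall
  rw [hexp, Complex.norm_exp_I_mul_ofReal_sub_one, norm_mul, Real.norm_two, Real.norm_eq_abs]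
  calc
    4 * |(b.valMinAbs : ℝ)| / n = 2 * (2 / Real.pi * (Real.pi * |(b.valMinAbs : ℝ)| / n)) := by
      field_simp
      ring
    _ ≤ _ := by rw [← habs]; gcongr

theorem norm_sum_stdAddChar_mul_abs_valMinAbs_le (L : ℕ) (b : ZMod n) :
    ‖∑ k ∈ Icc 1 L, stdAddChar ((k : ZMod n) * b)‖ * |(b.valMinAbs : ℝ)| ≤ n / 2 := by
  have hn : (0 : ℝ) < n := Nat.cast_pos.2 (NeZero.pos n)
  have hgeom : ‖∑ k ∈ Icc 1 L, stdAddChar ((k : ZMod n) * b)‖ * ‖stdAddChar b - 1‖ ≤ 2 := by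
    simp only [← nsmul_eq_mul, AddChar.map_nsmul_eq_pow]
    exact norm_sum_Icc_pow_mul_norm_sub_one_le (AddChar.norm_apply _ _).le L
  have hle : ‖∑ k ∈ Icc 1 L, stdAddChar ((k : ZMod n) * b)‖ * (4 * |(b.valMinAbs : ℝ)| / n) ≤ 2 :=
    (mul_le_mul_of_nonneg_left (four_mul_abs_valMinAbs_div_le_norm_stdAddChar_sub_one b)
      (norm_nonneg _)).trans hgeom
  rw [mul_div_assoc', div_le_iff₀ hn] at hle
  linarith

theorem norm_sum_stdAddChar_le (L : ℕ) (b : ZMod n) :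
    ‖∑ k ∈ Icc 1 L, stdAddChar ((k : ZMod n) * b)‖ ≤ L := by
  refine (norm_sum_le _ _).trans_eq ?_
  simp [AddChar.norm_apply]

theorem exists_eq_stdAddChar_mul {ψ : AddChar (ZMod n) ℂ} (hψ : ψ ≠ 0) :
    ∃ a : ZMod n, a ≠ 0 ∧ ∀ x, ψ x = stdAddChar (a * x) := by
  have hbij : Function.Bijective (AddChar.mulShift (stdAddChar (N := n))) :=
    (Fintype.bijective_iff_injective_and_card _).2
      ⟨AddChar.to_mulShift_inj_of_isPrimitive (isPrimitive_stdAddChar n), AddChar.card_eq.symm⟩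
  obtain ⟨a, rfl⟩ := hbij.surjective ψ
  refine ⟨a, ?_, fun x => AddChar.mulShift_apply⟩
  rintro rfl
  exact hψ (AddChar.mulShift_zero _)

end GeometricSum

section WrapNumber

open Finset ZMod Real

variable {n : ℕ}

/-- The integer `t` with `ℓ r = a + n t`, where `a` and `r` stand for the least absolute residues of
`a` and `a / ℓ` modulo `n`; the division by `n` is exact when `ℓ` is coprime to `n`. -/
def wrapNumber (a : ZMod n) (ℓ : ℕ) : ℤ :=
  (ℓ * (a * (ℓ : ZMod n)⁻¹).valMinAbs - a.valMinAbs) / n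

theorem natCast_mul_valMinAbs_eq_add_mul_wrapNumber (a : ZMod n) {ℓ : ℕ} (hℓ : ℓ.Coprime n) :
    ℓ * (a * (ℓ : ZMod n)⁻¹).valMinAbs = a.valMinAbs + n * wrapNumber a ℓ := by
  have hdvd : (n : ℤ) ∣ ℓ * (a * (ℓ : ZMod n)⁻¹).valMinAbs - a.valMinAbs := by
    rw [← intCast_zmod_eq_zero_iff_dvd]
    push_cast [coe_valMinAbs]
    rw [mul_left_comm, coe_mul_inv_eq_one ℓ hℓ, mul_one, sub_self]
  rw [wrapNumber, Int.mul_ediv_cancel' hdvd]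
  ring

variable [NeZero n]

theorem two_mul_abs_add_mul_wrapNumber_le (a : ZMod n) {ℓ : ℕ} (hℓ : ℓ.Coprime n) :
    2 * |a.valMinAbs + n * wrapNumber a ℓ| ≤ ℓ * n := by
  rw [← natCast_mul_valMinAbs_eq_add_mul_wrapNumber a hℓ, abs_mul, Nat.abs_cast, mul_left_comm]
  gcongr
  exact two_mul_abs_valMinAbs_le _

theorem two_mul_mul_abs_wrapNumber_le (a : ZMod n) {ℓ : ℕ} (hℓ : ℓ.Coprime n) :
    2 * (n * |wrapNumber a ℓ|) ≤ n + 2 * (ℓ * |(a * (ℓ : ZMod n)⁻¹).valMinAbs|) := by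
  have hsub : n * |wrapNumber a ℓ| = |ℓ * (a * (ℓ : ZMod n)⁻¹).valMinAbs - a.valMinAbs| := by
    rw [natCast_mul_valMinAbs_eq_add_mul_wrapNumber a hℓ, add_sub_cancel_left, abs_mul,
      Nat.abs_cast]
  have htri := abs_sub (ℓ * (a * (ℓ : ZMod n)⁻¹).valMinAbs) a.valMinAbs
  rw [abs_mul, Nat.abs_cast] at htri
  linarith [two_mul_abs_valMinAbs_le a]

theorem two_mul_abs_wrapNumber_le (a : ZMod n) {ℓ : ℕ} (hℓ : ℓ.Coprime n) :
    2 * |wrapNumber a ℓ| ≤ ℓ + 1 := by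
  have hn : (0 : ℤ) < n := Nat.cast_pos.2 (NeZero.pos n)
  refine le_of_mul_le_mul_left ?_ hn
  calc
    n * (2 * |wrapNumber a ℓ|) = 2 * (n * |wrapNumber a ℓ|) := mul_left_comm _ _ _
    _ ≤ n + ℓ * (2 * |(a * (ℓ : ZMod n)⁻¹).valMinAbs|) := by
      rw [mul_left_comm]
      linarith [two_mul_mul_abs_wrapNumber_le a hℓ]
    _ ≤ n + ℓ * n := by gcongr; exact two_mul_abs_valMinAbs_le _
    _ = n * (ℓ + 1) := by ring

theorem norm_sum_stdAddChar_le_div_abs_wrapNumber_add_one (a : ZMod n) {ℓ L : ℕ}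
    (hℓ : ℓ.Coprime n) (hℓL : ℓ ≤ 2 * L) :
    ‖∑ k ∈ Icc 1 L, stdAddChar ((k : ZMod n) * (a * (ℓ : ZMod n)⁻¹))‖ ≤
      5 / 2 * L * (1 / (|(wrapNumber a ℓ : ℝ)| + 1)) := by
  have hn : (0 : ℝ) < n := Nat.cast_pos.2 (NeZero.pos n)
  set r : ℝ := |((a * (ℓ : ZMod n)⁻¹).valMinAbs : ℝ)|
  set t : ℝ := |(wrapNumber a ℓ : ℝ)|
  set F : ℝ := ‖∑ k ∈ Icc 1 L, stdAddChar ((k : ZMod n) * (a * (ℓ : ZMod n)⁻¹))‖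
  have hF : F ≤ L := norm_sum_stdAddChar_le L _
  have hFr : F * r ≤ n / 2 := norm_sum_stdAddChar_mul_abs_valMinAbs_le L _
  have ht : 2 * (n * t) ≤ n + 2 * (ℓ * r) := by
    simp only [t, r]
    exact_mod_cast two_mul_mul_abs_wrapNumber_le a hℓ
  have hℓL' : (ℓ : ℝ) ≤ 2 * L := by exact_mod_cast hℓL
  have hFt : F * t ≤ F / 2 + L := by
    refine le_of_mul_le_mul_left ?_ (mul_pos two_pos hn)
    calc
      2 * n * (F * t) = F * (2 * (n * t)) := by ring
      _ ≤ F * (n + 2 * (ℓ * r)) := by gcongr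
      _ = n * F + 2 * ℓ * (F * r) := by ring
      _ ≤ n * F + 2 * (2 * L) * (n / 2) := by gcongr
      _ = 2 * n * (F / 2 + L) := by ring
  rw [mul_one_div, le_div_iff₀ (by positivity)]
  linarith

theorem card_filter_wrapNumber_eq_mul_log_log_le (hn : 2 ≤ n) {a : ZMod n} (ha : a ≠ 0)
    {P : Finset ℕ} (hP : ∀ ℓ ∈ P, ℓ.Prime ∧ ℓ.Coprime n ∧ ℓ ≤ 2 * n) (z : ℤ) :
    #{ℓ ∈ P | wrapNumber a ℓ = z} * log (log n) ≤ 3 * log n := by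
  have hlog : 0 < log n := log_pos (by exact_mod_cast hn)
  obtain hempty | ⟨ℓ₀, hℓ₀⟩ := {ℓ ∈ P | wrapNumber a ℓ = z}.eq_empty_or_nonempty
  · rw [hempty, card_empty, Nat.cast_zero, zero_mul]
    positivity
  set m : ℤ := a.valMinAbs + n * z with hm_def
  have hm : m.natAbs ≠ 0 := by
    rw [Int.natAbs_ne_zero]
    intro hm0
    exact ha (by simpa [hm_def] using congrArg (Int.cast : ℤ → ZMod n) hm0)
  have hm_le : m.natAbs ≤ n ^ 2 := by
    obtain ⟨hℓ₀P, rfl⟩ := mem_filter.1 hℓ₀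
    obtain ⟨-, hcop, hle⟩ := hP ℓ₀ hℓ₀P
    have hbound : 2 * |m| ≤ ℓ₀ * n := two_mul_abs_add_mul_wrapNumber_le a hcop
    have hmul : (ℓ₀ * n : ℤ) ≤ 2 * n * n := by gcongr; exact_mod_cast hle
    zify
    linarith
  have hdvd : {ℓ ∈ P | wrapNumber a ℓ = z} ⊆ m.natAbs.primeFactors := by
    intro ℓ hℓ
    obtain ⟨hℓP, rfl⟩ := mem_filter.1 hℓ
    obtain ⟨hprime, hcop, -⟩ := hP ℓ hℓP
    refine Nat.mem_primeFactors.2 ⟨hprime, ?_, hm⟩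
    rw [← Int.natCast_dvd, hm_def, ← natCast_mul_valMinAbs_eq_add_mul_wrapNumber a hcop]
    exact dvd_mul_right _ _
  calc
    #{ℓ ∈ P | wrapNumber a ℓ = z} * log (log n) ≤ log n + log m.natAbs :=
      card_mul_log_le_of_subset_primeFactors hm hdvd hlog
    _ ≤ log n + log ((n : ℝ) ^ 2) := by
      gcongr
      exact_mod_cast hm_le
    _ = 3 * log n := by rw [log_pow]; push_cast; ring

end WrapNumber

section ExceptionalSet

open Finset Real

variable {n : ℕ}

theorem one_lt_log_natCast (hn : 3 ≤ n) : 1 < log n := by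
  rw [lt_log_iff_exp_lt (by positivity)]
  exact exp_one_lt_three.trans_le (by exact_mod_cast hn)

theorem harmonic_le_two_mul_log (hn : 3 ≤ n) : (harmonic n : ℝ) ≤ 2 * log n := by
  linarith [harmonic_le_one_add_log n, one_lt_log_natCast hn]

theorem norm_sum_addChar_mul_inv_le [NeZero n] (hn : 3 ≤ n) {L : ℕ} (hL : L < n) {P : Finset ℕ}
    (hP : ∀ ℓ ∈ P, ℓ.Prime ∧ ℓ.Coprime n ∧ ℓ ≤ 2 * L) {ψ : AddChar (ZMod n) ℂ} (hψ : ψ ≠ 0) :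
    ‖∑ p ∈ Icc 1 L ×ˢ P, ψ (p.1 * (p.2 : ZMod n)⁻¹)‖ ≤ 30 * L * log n ^ 2 / log (log n) := by
  obtain ⟨a, ha, hψa⟩ := exists_eq_stdAddChar_mul hψ
  have hlog : 1 < log n := one_lt_log_natCast hn
  have hloglog : 0 < log (log n) := log_pos hlog
  have hwrap : ∀ ℓ ∈ P, |wrapNumber a ℓ| ≤ L := fun ℓ hℓ => by
    obtain ⟨-, hcop, hle⟩ := hP ℓ hℓ
    have := two_mul_abs_wrapNumber_le a hcop
    lia
  have hfiber (z : ℤ) : (#{ℓ ∈ P | wrapNumber a ℓ = z} : ℝ) ≤ 3 * log n / log (log n) :=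
    (le_div_iff₀ hloglog).2 <| card_filter_wrapNumber_eq_mul_log_log_le (by lia) ha
      (fun ℓ hℓ => ⟨(hP ℓ hℓ).1, (hP ℓ hℓ).2.1, by linarith [(hP ℓ hℓ).2.2]⟩) z
  have hharm : (harmonic (L + 1) : ℝ) ≤ 2 * log n := by
    refine le_trans ?_ (harmonic_le_two_mul_log hn)
    exact_mod_cast sum_le_sum_of_subset_of_nonneg (range_mono hL) fun _ _ _ => by positivity
  calc
    ‖∑ p ∈ Icc 1 L ×ˢ P, ψ (p.1 * (p.2 : ZMod n)⁻¹)‖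
      = ‖∑ ℓ ∈ P, ∑ k ∈ Icc 1 L, ZMod.stdAddChar ((k : ZMod n) * (a * (ℓ : ZMod n)⁻¹))‖ := by
        simp only [hψa, sum_product_right, mul_left_comm a]
    _ ≤ ∑ ℓ ∈ P, ‖∑ k ∈ Icc 1 L, ZMod.stdAddChar ((k : ZMod n) * (a * (ℓ : ZMod n)⁻¹))‖ :=
        norm_sum_le _ _
    _ ≤ ∑ ℓ ∈ P, 5 / 2 * L * (1 / (|(wrapNumber a ℓ : ℝ)| + 1)) := by
        gcongr with ℓ hℓ
        obtain ⟨-, hcop, hle⟩ := hP ℓ hℓ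
        exact norm_sum_stdAddChar_le_div_abs_wrapNumber_add_one a hcop hle
    _ = 5 / 2 * L * ∑ ℓ ∈ P, 1 / (|(wrapNumber a ℓ : ℝ)| + 1) := (mul_sum _ _ _).symm
    _ ≤ 5 / 2 * L * (2 * (3 * log n / log (log n)) * harmonic (L + 1)) := by
        gcongr
        exact sum_one_div_abs_add_one_le hwrap hfiber
    _ ≤ 5 / 2 * L * (2 * (3 * log n / log (log n)) * (2 * log n)) := by gcongr
    _ = 30 * L * log n ^ 2 / log (log n) := by ring

theorem of_mem_calL {L ℓ : ℕ} (hℓ : ℓ ∈ calL n L) : ℓ.Prime ∧ ℓ.Coprime n ∧ ℓ ≤ 2 * L := by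
  simp only [calL, mem_filter, mem_Ioc] at hℓ
  tauto

theorem calW_eq_univ [NeZero n] {L : ℕ} (hL : n ≤ L) (hne : (calL n L).Nonempty) :
    calW n L = univ := by
  obtain ⟨ℓ, hℓ⟩ := hne
  refine eq_univ_of_forall fun x => ?_
  obtain ⟨k, hk, hkx⟩ : ∃ k ∈ Icc 1 L, (k : ZMod n) = x * ℓ := by
    obtain hzero | hpos := Nat.eq_zero_or_pos (x * ℓ).val
    · refine ⟨n, mem_Icc.2 ⟨NeZero.pos n, hL⟩, ?_⟩
      rw [(ZMod.val_eq_zero _).1 hzero, ZMod.natCast_self]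
    · refine ⟨(x * ℓ).val, mem_Icc.2 ⟨hpos, (ZMod.val_lt _).le.trans hL⟩, ?_⟩
      exact ZMod.natCast_rightInverse _
  refine mem_image.2 ⟨(k, ℓ), mem_product.2 ⟨hk, hℓ⟩, ?_⟩
  rw [hkx, mul_assoc, ZMod.coe_mul_inv_eq_one ℓ (of_mem_calL hℓ).2.1, mul_one]

open scoped Pointwise

theorem natCard_setOf_not_exists_eq_add {G : Type*} [Add G] [Fintype G] [DecidableEq G]
    (S W : Finset G) :
    Nat.card {u : G | ¬ ∃ s ∈ S, ∃ w ∈ W, u = s + w} = #(S + W)ᶜ := by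
  rw [Nat.card_coe_set_eq, ← Set.ncard_coe_finset]
  congr 1
  ext u
  simp [-coe_add, mem_add, eq_comm]

theorem card_compl_add_calW_mul_le_of_lt [NeZero n] (hn : 3 ≤ n) {L : ℕ} (hL : L < n)
    (S : Finset (ZMod n)) :
    (#(S + calW n L)ᶜ * #S * #(calL n L) ^ 2 * log (log n) ^ 2 : ℝ) ≤
      30 ^ 2 * n ^ 2 * log n ^ 4 := by
  obtain rfl | hLpos := Nat.eq_zero_or_pos L
  · have hempty : calL n 0 = ∅ := by simp [calL]
    rw [hempty, card_empty, Nat.cast_zero, zero_pow two_ne_zero, mul_zero, zero_mul]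
    positivity
  have hloglog : 0 < log (log n) := log_pos (one_lt_log_natCast hn)
  have havoid : ∀ u ∈ (S + calW n L)ᶜ, ∀ s ∈ S, ∀ p ∈ Icc 1 L ×ˢ calL n L,
      u ≠ s + p.1 * (p.2 : ZMod n)⁻¹ := by
    rintro u hu s hs p hp rfl
    exact mem_compl.1 hu (add_mem_add hs (mem_image_of_mem _ hp))
  have hfourier := card_mul_card_mul_card_sq_le havoid
    fun ψ hψ => norm_sum_addChar_mul_inv_le hn hL (fun ℓ => of_mem_calL) hψ
  rw [Nat.card_zmod, card_product, Nat.card_Icc, Nat.add_sub_cancel, Nat.cast_mul, mul_div_assoc',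
    div_pow, le_div_iff₀ (by positivity)] at hfourier
  refine le_of_mul_le_mul_left ?_ (by positivity : (0 : ℝ) < L ^ 2)
  linear_combination hfourier

theorem card_compl_add_calW_mul_eq_zero [NeZero n] {L : ℕ} (hL : n ≤ L) (S : Finset (ZMod n)) :
    (#(S + calW n L)ᶜ * #S * #(calL n L) ^ 2 : ℝ) = 0 := by
  obtain hempty | hne := (calL n L).eq_empty_or_nonempty
  · simp [hempty]
  obtain rfl | ⟨s, hs⟩ := S.eq_empty_or_nonempty
  · simp
  have hcover : S + calW n L = univ := eq_univ_of_forall fun u => by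
    rw [calW_eq_univ hL hne]
    exact mem_add.2 ⟨s, hs, -s + u, mem_univ _, add_neg_cancel_left s u⟩
  simp [hcover]

end ExceptionalSet

theorem exceptional_set_bound_general {n : ℕ} (hn : 3 ≤ n) (L : ℕ) (S : Finset (ZMod n)) :
    (Nat.card {u : ZMod n | ¬ ∃ s ∈ S, ∃ w ∈ calW n L, u = s + w} : ℝ) *
        (S.card : ℝ) * ((calL n L).card : ℝ) ^ 2 * (Real.log (Real.log n)) ^ 2
      ≤ 30 ^ 2 * (n : ℝ) ^ 2 * (Real.log n) ^ 4 := by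
  have : NeZero n := ⟨by lia⟩
  rw [natCard_setOf_not_exists_eq_add]
  obtain hL | hL := lt_or_ge L n
  · exact card_compl_add_calW_mul_le_of_lt hn hL S
  · rw [card_compl_add_calW_mul_eq_zero hL S, zero_mul]
    positivity

/-- There exist `C > 0` and `n₀` such that for every `n ≥ n₀`, every positive
integer `L < 0.5·n^{1/2}`, and every nonempty `S ⊆ Z_n`, the set `U` of `u ∈ Z_n` not
representable as `u = s + w` with `(s, w) ∈ S × W` satisfies
`#U · #S · (#𝓛)² · (log log n)² ≤ C · n² (log n)⁴`. -/
theorem exceptional_set_bound :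
    ∃ C : ℝ, C > 0 ∧ ∃ n₀ : ℕ, ∀ n : ℕ, n₀ ≤ n →
      ∀ L : ℕ, 0 < L → (L : ℝ) < 0.5 * Real.sqrt n →
        ∀ S : Finset (ZMod n), S.Nonempty →
          (Nat.card {u : ZMod n | ¬ ∃ s ∈ S, ∃ w ∈ calW n L, u = s + w} : ℝ) *
              (S.card : ℝ) * ((calL n L).card : ℝ) ^ 2 * (Real.log (Real.log n)) ^ 2
            ≤ C * (n : ℝ) ^ 2 * (Real.log n) ^ 4 := by
  exact ⟨30 ^ 2, by norm_num, 3, fun n hn L _ _ S _ => exceptional_set_bound_general hn L S⟩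
end

section
/- For every function ψ: ℕ → ℝ with ψ(n) → ∞ as n → ∞, there exist a function φ: ℕ → ℝ with φ(n) → ∞ as n → ∞ and a constant n₀ such that for every integer n ≥ n₀ and every integer k with 1 ≤ k ≤ n, there exists a set W ⊆ Z_n with #W ≤ ψ(n) · n (log n)^{3} / (k^{1/2} · log log n) such that for every set S ⊆ Z̃_n with #S ≥ k, the number of u ∈ Z_n that cannot be written as u = s + w with s ∈ S and w ∈ W is at most n / φ(n); that is, W "almost dominates" every circulant graph C_n(S) with #S ≥ k, and W does not depend on S. -/
/-!
A set `W` of size about `(4 n log n) / t` chosen greedily meets every set of the form `-S' + A` with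
`#S' = #A = t` and `t² ≤ 2 * #(-S' + A)`, because there are at most `n ^ (2 * t)` of these. If some
`S ⊇ S'` and `W` left a set `U` of at least `2 * t²` elements outside `S + W`, then greedily chosen
translates `-S' + u`, `u ∈ U`, would overlap so little that `t` of them form such a set `-S' + A`
with `A ⊆ U`; an element `-s + u` of it lying in `W` contradicts `u ∉ S + W`. Hence `S + W` misses
fewer than `2 * t²` elements. Taking `t` of order `√(ε * k)` makes this at most `ε * n`, with `W` of
size `O(n log n / √(ε * k))`; the growth of `ψ(n) (log n)² / log log n` leaves room for `ε → 0`.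
-/

section

open Filter
open scoped Finset Pointwise

section HittingSet

variable {α : Type*} [Fintype α] [Nonempty α] {𝒟 : Finset (Finset α)} {d : ℝ}

theorem exists_card_filter_notMem_le [DecidableEq α] (h𝒟 : ∀ D ∈ 𝒟, d ≤ #D) :
    ∃ x, (#{D ∈ 𝒟 | x ∉ D} : ℝ) ≤ (1 - d / Fintype.card α) * #𝒟 := by
  have double_count : ∑ x, #{D ∈ 𝒟 | x ∉ D} = ∑ D ∈ 𝒟, #Dᶜ := by
    simpa [Finset.bipartiteAbove, Finset.bipartiteBelow, Finset.compl_eq_univ_sdiff,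
      Finset.filter_notMem_eq_sdiff] using
      Finset.sum_card_bipartiteAbove_eq_sum_card_bipartiteBelow (s := Finset.univ) (t := 𝒟)
        fun x D => x ∉ D
  have card_compl_le : ∀ D ∈ 𝒟, (#Dᶜ : ℝ) ≤ Fintype.card α - d := fun D hD => by
    rw [Finset.card_compl, Nat.cast_sub D.card_le_univ]
    linarith [h𝒟 D hD]
  suffices h : ∑ x : α, (#{D ∈ 𝒟 | x ∉ D} : ℝ) ≤ ∑ _x : α, (1 - d / Fintype.card α) * #𝒟 by
    obtain ⟨x, -, hx⟩ := Finset.exists_le_of_sum_le Finset.univ_nonempty h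
    exact ⟨x, hx⟩
  calc ∑ x : α, (#{D ∈ 𝒟 | x ∉ D} : ℝ) = ∑ D ∈ 𝒟, (#Dᶜ : ℝ) := mod_cast double_count
    _ ≤ #𝒟 • (Fintype.card α - d) := Finset.sum_le_card_nsmul _ _ _ card_compl_le
    _ = ∑ _x : α, (1 - d / Fintype.card α) * #𝒟 := by
      simp only [nsmul_eq_mul, Finset.sum_const, Finset.card_univ]
      field_simp

theorem exists_card_filter_disjoint_le [DecidableEq α] (h𝒟 : ∀ D ∈ 𝒟, d ≤ #D) (M : ℕ) :
    ∃ W : Finset α, #W ≤ M ∧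
      (#{D ∈ 𝒟 | Disjoint D W} : ℝ) ≤ Real.exp (-(M * d / Fintype.card α)) * #𝒟 := by
  induction M with
  | zero => exact ⟨∅, by simp⟩
  | succ M ih =>
    obtain ⟨W, hWM, hW⟩ := ih
    obtain ⟨x, hx⟩ := exists_card_filter_notMem_le (𝒟 := {D ∈ 𝒟 | Disjoint D W})
      fun D hD => h𝒟 D (Finset.mem_filter.1 hD).1
    refine ⟨insert x W, (Finset.card_insert_le x W).trans (by gcongr), ?_⟩
    calc (#{D ∈ 𝒟 | Disjoint D (insert x W)} : ℝ)
        = #{D ∈ {D ∈ 𝒟 | Disjoint D W} | x ∉ D} := by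
          simp only [Finset.filter_filter, Finset.disjoint_insert_right, and_comm]
      _ ≤ (1 - d / Fintype.card α) * #{D ∈ 𝒟 | Disjoint D W} := hx
      _ ≤ Real.exp (-(d / Fintype.card α)) * (Real.exp (-(M * d / Fintype.card α)) * #𝒟) := by
          gcongr
          exact Real.one_sub_le_exp_neg _
      _ = Real.exp (-((M + 1 : ℕ) * d / Fintype.card α)) * #𝒟 := by
          rw [← mul_assoc, ← Real.exp_add]
          push_cast
          ring_nf

theorem exists_hitting_set {M : ℕ} (h𝒟 : ∀ D ∈ 𝒟, d ≤ #D)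
    (hM : (#𝒟 : ℝ) < Real.exp (M * d / Fintype.card α)) :
    ∃ W : Finset α, #W ≤ M ∧ ∀ D ∈ 𝒟, ¬ Disjoint D W := by
  classical
  obtain ⟨W, hWM, hW⟩ := exists_card_filter_disjoint_le h𝒟 M
  refine ⟨W, hWM, Finset.filter_eq_empty_iff.1 (Finset.card_eq_zero.1 (Nat.lt_one_iff.1 ?_))⟩
  have hlt : (#{D ∈ 𝒟 | Disjoint D W} : ℝ) < 1 := hW.trans_lt <| by
    rwa [Real.exp_neg, inv_mul_lt_one₀ (Real.exp_pos _)]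
  exact_mod_cast hlt

end HittingSet

section Translates

variable {G : Type*} [AddGroup G] [DecidableEq G]

theorem sum_card_add_singleton_inter_le (T U D : Finset G) :
    ∑ u ∈ U, #((T + {u}) ∩ D) ≤ #T * #D := by
  rw [← Finset.card_sigma, ← Finset.card_product]
  refine Finset.card_le_card_of_injOn (fun p => (p.2 - p.1, p.2)) ?_ ?_
  · rintro ⟨u, x⟩ hux
    obtain ⟨-, hxu, hxD⟩ : u ∈ U ∧ x - u ∈ T ∧ x ∈ D := by
      simpa [sub_eq_add_neg] using hux
    simp [hxu, hxD]
  · rintro ⟨u, x⟩ - ⟨v, y⟩ - huv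
    obtain ⟨hsub, rfl⟩ : x - u = y - v ∧ x = y := by simpa using huv
    rw [sub_right_injective hsub]

theorem exists_two_mul_card_add_singleton_inter_le {U D : Finset G} (T : Finset G)
    (hU : U.Nonempty) (hD : 2 * #D ≤ #U) : ∃ u ∈ U, 2 * #((T + {u}) ∩ D) ≤ #T := by
  refine Finset.exists_le_of_sum_le hU ?_
  calc ∑ u ∈ U, 2 * #((T + {u}) ∩ D) = 2 * ∑ u ∈ U, #((T + {u}) ∩ D) := by rw [Finset.mul_sum]
    _ ≤ 2 * (#T * #D) := by gcongr; exact sum_card_add_singleton_inter_le T U D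
    _ = 2 * #D * #T := by ring
    _ ≤ #U * #T := by gcongr
    _ = ∑ _u ∈ U, #T := by simp

theorem exists_subset_card_eq_mul_card_le_card_add {T U : Finset G} (hT : T.Nonempty) (m : ℕ)
    (hU : 2 * m * #T ≤ #U) : ∃ A ⊆ U, #A = m ∧ m * #T ≤ 2 * #(T + A) := by
  induction m with
  | zero => exact ⟨∅, by simp⟩
  | succ m ih =>
    have hTpos : 0 < #T := hT.card_pos
    obtain ⟨A, hAU, rfl, hA⟩ := ih (by nlinarith)
    have hTA : 2 * #(T + A) ≤ #U := by
      have := Finset.card_add_le (s := T) (t := A)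
      nlinarith
    have hUne : U.Nonempty := Finset.card_pos.1 (by nlinarith)
    obtain ⟨u, huU, hu⟩ := exists_two_mul_card_add_singleton_inter_le T hUne hTA
    have huA : u ∉ A := fun huA => by
      have hsub : T + {u} ⊆ T + A :=
        Finset.add_subset_add_left (Finset.singleton_subset_iff.2 huA)
      rw [Finset.inter_eq_left.2 hsub, Finset.card_add_singleton] at hu
      lia
    refine ⟨insert u A, Finset.insert_subset huU hAU, Finset.card_insert_of_notMem huA, ?_⟩
    have hcard := Finset.card_union_add_card_inter (T + {u}) (T + A)
    rw [Finset.card_add_singleton] at hcard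
    rw [Finset.insert_eq, Finset.add_union]
    linarith

end Translates

section Domination

variable {G : Type*} [AddGroup G]

section SpreadDifferences

variable [Fintype G] [DecidableEq G]

variable (G) in
/-- The sets `-S + A` with `#S = #A = t` and `t² ≤ 2 * #(-S + A)`, which a dominating set
independent of `S` is made to hit. -/
def spreadDifferences (t : ℕ) : Finset (Finset G) :=
  {D ∈ Finset.image₂ (fun S A => -S + A) (Finset.univ.powersetCard t) (Finset.univ.powersetCard t) |
    t ^ 2 ≤ 2 * #D}

theorem neg_add_mem_spreadDifferences {S A : Finset G} {t : ℕ} (hS : #S = t) (hA : #A = t)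
    (h : t ^ 2 ≤ 2 * #(-S + A)) : -S + A ∈ spreadDifferences G t :=
  Finset.mem_filter.2 ⟨Finset.mem_image₂_of_mem
    (Finset.mem_powersetCard_univ.2 hS) (Finset.mem_powersetCard_univ.2 hA), h⟩

theorem sq_div_two_le_card_of_mem_spreadDifferences {D : Finset G} {t : ℕ}
    (hD : D ∈ spreadDifferences G t) : (t : ℝ) ^ 2 / 2 ≤ #D := by
  have : (t : ℝ) ^ 2 ≤ 2 * #D := mod_cast (Finset.mem_filter.1 hD).2
  linarith

theorem card_spreadDifferences_le (t : ℕ) :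
    #(spreadDifferences G t) ≤ Fintype.card G ^ t * Fintype.card G ^ t := by
  have card_powersetCard_le : #((Finset.univ : Finset G).powersetCard t) ≤ Fintype.card G ^ t :=
    (Finset.card_powersetCard _ _).trans_le (Nat.choose_le_pow _ _)
  calc #(spreadDifferences G t) ≤ _ := Finset.card_filter_le _ _
    _ ≤ _ := Finset.card_image₂_le _ _ _
    _ ≤ _ := Nat.mul_le_mul card_powersetCard_le card_powersetCard_le

theorem card_spreadDifferences_lt_exp {t M : ℕ} (ht : 0 < t)
    (hM : 4 * Fintype.card G * Real.log (Fintype.card G) < M * t) :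
    (#(spreadDifferences G t) : ℝ) < Real.exp (M * (t ^ 2 / 2) / Fintype.card G) := by
  have hn : (0 : ℝ) < Fintype.card G := mod_cast Fintype.card_pos
  have ht' : (0 : ℝ) < t := mod_cast ht
  calc (#(spreadDifferences G t) : ℝ) ≤ (Fintype.card G : ℝ) ^ t * (Fintype.card G : ℝ) ^ t :=
        mod_cast card_spreadDifferences_le t
    _ = Real.exp (t * Real.log (Fintype.card G) + t * Real.log (Fintype.card G)) := by
        rw [Real.exp_add, Real.exp_nat_mul, Real.exp_log hn]
    _ < Real.exp (M * (t ^ 2 / 2) / Fintype.card G) := by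
        rw [Real.exp_lt_exp, lt_div_iff₀ hn]
        nlinarith

theorem exists_card_compl_add_lt {t M : ℕ} (ht : 0 < t)
    (hM : 4 * Fintype.card G * Real.log (Fintype.card G) < M * t) :
    ∃ W : Finset G, #W ≤ M ∧ ∀ S : Finset G, t ≤ #S → #(S + W)ᶜ < 2 * t ^ 2 := by
  obtain ⟨W, hWM, hW⟩ := exists_hitting_set
    (fun D => sq_div_two_le_card_of_mem_spreadDifferences) (card_spreadDifferences_lt_exp ht hM)
  refine ⟨W, hWM, fun S hS => ?_⟩
  by_contra! hU
  obtain ⟨S', hS'S, hS'⟩ := Finset.exists_subset_card_eq hS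
  have hnegS' : #(-S') = t := (Finset.card_neg _).trans hS'
  obtain ⟨A, hAU, hAcard, hA⟩ := exists_subset_card_eq_mul_card_le_card_add
    (T := -S') (U := (S + W)ᶜ) (Finset.card_pos.1 (by lia)) t (by rw [hnegS']; linarith)
  have hmem : -S' + A ∈ spreadDifferences G t :=
    neg_add_mem_spreadDifferences hS' hAcard (by rwa [hnegS', ← sq] at hA)
  obtain ⟨w, hwD, hwW⟩ := Finset.not_disjoint_iff.1 (hW _ hmem)
  obtain ⟨s, hs, u, huA, rfl⟩ := Finset.mem_add.1 hwD
  refine Finset.mem_compl.1 (hAU huA) ?_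
  simpa using Finset.add_mem_add (hS'S (Finset.mem_neg'.1 hs)) hwW

end SpreadDifferences

theorem one_le_log_natCast {n : ℕ} (hn : 3 ≤ n) : 1 ≤ Real.log n := by
  have hn' : (3 : ℝ) ≤ n := mod_cast hn
  rw [Real.le_log_iff_exp_le (by linarith)]
  exact Real.exp_one_lt_three.le.trans hn'

theorem exists_card_mul_le_forall_ncard_compl_add_le [Finite G] {t : ℕ} (hG : 3 ≤ Nat.card G)
    (ht : 1 ≤ t) (htG : t ≤ Nat.card G) :
    ∃ W : Finset G, (#W * t : ℝ) ≤ 5 * Nat.card G * Real.log (Nat.card G) ∧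
      ∀ S : Finset G, t ≤ #S → ((S : Set G) + W)ᶜ.ncard ≤ 2 * t ^ 2 := by
  classical
  have := Fintype.ofFinite G
  rw [Nat.card_eq_fintype_card] at *
  set n := Fintype.card G
  have hlog : 1 ≤ Real.log n := one_le_log_natCast hG
  have ht₀ : (0 : ℝ) < t := mod_cast ht
  have htn : (t : ℝ) ≤ n := mod_cast htG
  obtain ⟨W, hWM, hW⟩ := exists_card_compl_add_lt (G := G)
    (M := ⌊4 * n * Real.log n / t⌋₊ + 1) ht <| by
      rw [← div_lt_iff₀ ht₀]
      exact_mod_cast Nat.lt_floor_add_one _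
  refine ⟨W, ?_, fun S hS => ?_⟩
  · calc (#W * t : ℝ) ≤ (⌊4 * n * Real.log n / t⌋₊ + 1) * t := by gcongr; exact_mod_cast hWM
      _ ≤ (4 * n * Real.log n / t + 1) * t := by gcongr; exact Nat.floor_le (by positivity)
      _ = 4 * n * Real.log n + t := by field_simp
      _ ≤ 4 * n * Real.log n + n * Real.log n := by gcongr; nlinarith
      _ = 5 * n * Real.log n := by ring
  · rw [← Finset.coe_add, ← Finset.coe_compl, Set.ncard_coe_finset]
    exact (hW S hS).le

theorem exists_card_le_forall_ncard_compl_add_le [Finite G] {k : ℕ} {ε : ℝ}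
    (hG : 3 ≤ Nat.card G) (hk : 1 ≤ k) (hkG : k ≤ Nat.card G) (hε : 0 < ε) (hε1 : ε ≤ 1) :
    ∃ W : Finset G, (#W : ℝ) ≤ 20 * Nat.card G * Real.log (Nat.card G) / √(ε * k) ∧
      ∀ S : Finset G, k ≤ #S → (((S : Set G) + W)ᶜ.ncard : ℝ) ≤ ε * Nat.card G := by
  set n := Nat.card G
  set x := √(ε * k)
  have hk' : (1 : ℝ) ≤ k := mod_cast hk
  have hkn : (k : ℝ) ≤ n := mod_cast hkG
  have hx : 0 < x := by positivity
  have hxsq : x ^ 2 = ε * k := Real.sq_sqrt (by positivity)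
  simp only [le_div_iff₀ hx]
  rcases lt_or_ge x 2 with hx2 | hx2
  · have := Fintype.ofFinite G
    refine ⟨Finset.univ, ?_, fun S hS => ?_⟩
    · rw [Finset.card_univ, ← Nat.card_eq_fintype_card]
      calc (n : ℝ) * x ≤ n * 2 := by gcongr
        _ ≤ 20 * n * 1 := by linarith
        _ ≤ 20 * n * Real.log n := by gcongr; exact one_le_log_natCast hG
    · have hSne : S.Nonempty := Finset.card_pos.1 (by lia)
      rw [Finset.coe_univ, Set.add_univ hSne.to_set, Set.compl_univ, Set.ncard_empty, Nat.cast_zero]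
      positivity
  · set t := ⌊x / 2⌋₊
    have ht : 1 ≤ t := Nat.le_floor (by push_cast; linarith)
    have ht' : (1 : ℝ) ≤ t := mod_cast ht
    have htx : t ≤ x / 2 := Nat.floor_le (by positivity)
    have hxt : x ≤ 4 * t := by linarith [Nat.lt_floor_add_one (x / 2)]
    have htk : t ≤ k := mod_cast (by nlinarith : (t : ℝ) ≤ k)
    obtain ⟨W, hWt, hW⟩ := exists_card_mul_le_forall_ncard_compl_add_le hG ht (htk.trans hkG)
    refine ⟨W, ?_, fun S hS => ?_⟩
    · calc (#W : ℝ) * x ≤ #W * (4 * t) := by gcongr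
        _ = 4 * (#W * t) := by ring
        _ ≤ 4 * (5 * n * Real.log n) := by gcongr
        _ = 20 * n * Real.log n := by ring
    · calc (((S : Set G) + W)ᶜ.ncard : ℝ) ≤ 2 * t ^ 2 := mod_cast hW S (htk.trans hS)
        _ ≤ 2 * (x / 2) ^ 2 := by gcongr
        _ ≤ ε * k := by nlinarith
        _ ≤ ε * n := by gcongr

end Domination

theorem universal_almost_dominating_set_general {f : ℕ → ℝ} (hf : Tendsto f atTop atTop) :
    ∃ φ : ℕ → ℝ, Tendsto φ atTop atTop ∧ ∃ n₀ : ℕ, ∀ n : ℕ, n₀ ≤ n → ∀ k : ℕ, 1 ≤ k → k ≤ n →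
      ∀ (G : Type*) [AddGroup G], Nat.card G = n →
        ∃ W : Finset G, (#W : ℝ) ≤ f n * n * Real.log n / √k ∧
          ∀ S : Finset G, k ≤ #S → (((S : Set G) + W)ᶜ.ncard : ℝ) ≤ n / φ n := by
  obtain ⟨n₀, hn₀⟩ := eventually_atTop.1
    ((hf.eventually_ge_atTop 20).and (eventually_ge_atTop 3))
  refine ⟨fun n => (f n / 20) ^ 2,
    (tendsto_pow_atTop two_ne_zero).comp (hf.atTop_div_const (by norm_num)), n₀, ?_⟩
  rintro n hn k hk hkn G _ rfl
  obtain ⟨hfn, hG⟩ := hn₀ _ hn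
  have : Finite G := Nat.finite_of_card_ne_zero (by lia)
  have hε : (f (Nat.card G) / 20)⁻¹ ^ 2 ≤ 1 :=
    pow_le_one₀ (by positivity) (inv_le_one_of_one_le₀ (by linarith))
  obtain ⟨W, hWcard, hW⟩ := exists_card_le_forall_ncard_compl_add_le hG hk hkn (by positivity) hε
  refine ⟨W, hWcard.trans_eq ?_, fun S hS => (hW S hS).trans_eq ?_⟩
  · rw [Real.sqrt_mul (by positivity), Real.sqrt_sq (by positivity)]
    field_simp
  · ring

theorem tendsto_log_sq_div_log_log_atTop :
    Tendsto (fun n : ℕ => Real.log n ^ 2 / Real.log (Real.log n)) atTop atTop := by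
  have hsq : Tendsto (fun x : ℝ => x ^ 2 / Real.log x) atTop atTop := by
    refine tendsto_atTop_mono' _ ?_ tendsto_id
    filter_upwards [eventually_gt_atTop 1] with x hx
    rw [id, le_div_iff₀ (Real.log_pos hx), sq]
    gcongr
    exact Real.log_le_self (by linarith)
  exact hsq.comp (Real.tendsto_log_atTop.comp tendsto_natCast_atTop_atTop)

end

/-- For every `ψ : ℕ → ℝ` with `ψ(n) → ∞`, there exist `φ : ℕ → ℝ` with
`φ(n) → ∞` and `n₀` such that for every `n ≥ n₀` and every `1 ≤ k ≤ n` there is a set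
`W ⊆ Z_n` with `#W ≤ ψ(n) · n (log n)³ / (k^{1/2} log log n)` which almost dominates
every circulant graph `C_n(S)` with `S ⊆ Z̃_n`, `#S ≥ k`: the number of `u ∈ Z_n` not of
the form `s + w` with `s ∈ S`, `w ∈ W` is at most `n / φ(n)`. `W` does not depend on `S`. -/
theorem universal_almost_dominating_set (ψ : ℕ → ℝ)
    (hψ : Filter.Tendsto ψ Filter.atTop Filter.atTop) :
    ∃ φ : ℕ → ℝ, Filter.Tendsto φ Filter.atTop Filter.atTop ∧ ∃ n₀ : ℕ,
      ∀ n : ℕ, n₀ ≤ n → ∀ k : ℕ, 1 ≤ k → k ≤ n →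
        ∃ W : Finset (ZMod n),
          (W.card : ℝ) ≤ ψ n * n * (Real.log n) ^ 3 /
              ((k : ℝ) ^ ((1 : ℝ) / 2) * Real.log (Real.log n)) ∧
          ∀ S : Finset (ZMod n), (0 : ZMod n) ∉ S → k ≤ S.card →
            (Nat.card {u : ZMod n | ¬ ∃ s ∈ S, ∃ w ∈ W, u = s + w} : ℝ) ≤ n / φ n := by
  obtain ⟨φ, hφ, n₀, hn₀⟩ := universal_almost_dominating_set_general
    (hψ.atTop_mul_atTop₀ tendsto_log_sq_div_log_log_atTop)
  refine ⟨φ, hφ, n₀, fun n hn k hk hkn => ?_⟩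
  obtain ⟨W, hWcard, hW⟩ := hn₀ n hn k hk hkn (ZMod n) (Nat.card_zmod n)
  refine ⟨W, hWcard.trans_eq (by rw [Real.sqrt_eq_rpow]; ring), fun S _ hS => ?_⟩
  simpa [Set.ncard, Set.compl_def, Set.mem_add, eq_comm] using hW S hS
end
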